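/- Let ℓ ≥ 4 be an integer, G a finite connected graph not containing the ℓ-wheel W_ℓ as an induced minor, and w a normal weighting of G. Let C be an induced cycle in G of length at least 4 such that J := V(G) \ V(C) is an independent set. If w(v) ≤ 1/2 for all v ∈ J, then there exists a w-balanced separator S ⊆ V(C) of G with |S| ≤ (ℓ-1)². -/

import Mathlib

open SimpleGraph

variable {V : Type}

/-- `u` and `v` are connected by a walk in `G` avoiding `S`
(i.e., they lie in the same component of `G - S`). -/
def ReachOutside (G : SimpleGraph V) (S : Set V) (u v : V) : Prop :=
  ∃ p : G.Walk u v, ∀ x ∈ p.support, x ∉ S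

/-- Total weight of a vertex set. -/
noncomputable def setWeight [Finite V] (w : V → ℝ) (A : Set V) : ℝ :=
  ∑ v ∈ (Set.toFinite A).toFinset, w v

/-- `S` is a `w`-balanced separator of `G`: every component of `G - S`
has weight at most half the total weight. -/
def IsBalancedSep [Finite V] (G : SimpleGraph V) (w : V → ℝ) (S : Set V) : Prop :=
  ∀ v, v ∉ S → setWeight w {u | ReachOutside G S u v} ≤ setWeight w (Set.univ : Set V) / 2

/-- Closed neighbourhood `N[A]` of a vertex set. -/
def closedNbhd (G : SimpleGraph V) (A : Set V) : Set V :=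
  A ∪ {x | ∃ a ∈ A, G.Adj a x}

/-- `S` separates `A` from `B` in `G`: every walk from `A` to `B` meets `S`. -/
def Separates (G : SimpleGraph V) (S A B : Set V) : Prop :=
  ∀ a ∈ A, ∀ b ∈ B, ∀ p : G.Walk a b, ∃ x ∈ p.support, x ∈ S

/-- `C` is (the vertex set of) an induced cycle of `G`: the induced subgraph is
connected and every vertex of `C` has exactly two neighbours in `C`. -/
def IsInducedCycle (G : SimpleGraph V) (C : Set V) : Prop :=
  (G.induce C).Connected ∧ ∀ x ∈ C, (G.neighborSet x ∩ C).ncard = 2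

/-- `H` is an induced minor of `G`. -/
def IsInducedMinor {W : Type} (H : SimpleGraph W) (G : SimpleGraph V) : Prop :=
  ∃ X : W → Set V,
    (∀ a, (G.induce (X a)).Connected) ∧
    (Pairwise fun a b => Disjoint (X a) (X b)) ∧
    ∀ a b, a ≠ b → ((∃ u ∈ X a, ∃ v ∈ X b, G.Adj u v) ↔ H.Adj a b)

/-- `H` is a minor of `G`. -/
def IsMinor {W : Type} (H : SimpleGraph W) (G : SimpleGraph V) : Prop :=
  ∃ X : W → Set V,
    (∀ a, (G.induce (X a)).Connected) ∧
    (Pairwise fun a b => Disjoint (X a) (X b)) ∧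
    ∀ a b, H.Adj a b → ∃ u ∈ X a, ∃ v ∈ X b, G.Adj u v

/-- The `ℓ`-wheel: a cycle of length `ℓ` plus a universal vertex (`none`). -/
def wheel (ℓ : ℕ) : SimpleGraph (Option (ZMod ℓ)) :=
  SimpleGraph.fromRel fun a b =>
    a = none ∨ b = none ∨ ∃ i : ZMod ℓ, a = some i ∧ b = some (i + 1)

/-- The `ℓ`-fan: a path on `ℓ` vertices plus a universal vertex (`none`). -/
def fan (ℓ : ℕ) : SimpleGraph (Option (Fin ℓ)) :=
  SimpleGraph.fromRel fun a b =>
    a = none ∨ b = none ∨ ∃ i j : Fin ℓ, a = some i ∧ b = some j ∧ (j : ℕ) = (i : ℕ) + 1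

/-!
Suppose no small subset of `C` is a balanced separator, so that deleting any of them leaves a heavy
component. The open arc between two cyclically consecutive neighbours on `C` of a vertex outside
`C` is cut off from the rest of the cycle by at most `ℓ - 1` vertices: were there more, contracting
the neighbourhood of the complementary arc to a hub would give an `ℓ`-wheel.

Among the arcs whose interior holds a heavy component, the whole cycle cut open at one vertex
included, take a shortest one and cut it at its median. A component of its interior that stays on
one side of the median is not heavy, so some vertex `u` of the interior has neighbours on both
sides; choose `u` and two such neighbours `lo`, `hi` as far apart as possible. Since `u` has fewer
than `ℓ` neighbours on `C`, deleting the separators of all the arcs between consecutive ones costs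
at most `(ℓ - 1) ^ 2` vertices and leaves one of these arcs heavy. By minimality of the first arc
it can only be the arc from `hi` around to `lo`. Hence a heavy component avoids the stretch from
`lo` to `hi`; by the choice of `u` none of its vertices has neighbours on both sides of this
stretch, so it stays on one side of the median, a contradiction.
-/

section Components

variable {G : SimpleGraph V} {S T : Set V} {u v x : V}

namespace ReachOutside

lemma symm (h : ReachOutside G S u v) : ReachOutside G S v u := by
  obtain ⟨p, hp⟩ := h
  exact ⟨p.reverse, fun y hy => hp y (by simpa using hy)⟩

lemma trans (huv : ReachOutside G S u v) (hvx : ReachOutside G S v x) : ReachOutside G S u x := by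
  obtain ⟨p, hp⟩ := huv
  obtain ⟨q, hq⟩ := hvx
  exact ⟨p.append q, fun y hy =>
    ((Walk.mem_support_append_iff _ _).1 hy).elim (hp y) (hq y)⟩

lemma anti (hST : S ⊆ T) (h : ReachOutside G T u v) : ReachOutside G S u v := by
  obtain ⟨p, hp⟩ := h
  exact ⟨p, fun y hy hyS => hp y hy (hST hyS)⟩

lemma notMem_left (h : ReachOutside G S u v) : u ∉ S := by
  obtain ⟨p, hp⟩ := h
  exact hp u p.start_mem_support

lemma of_adj (hu : u ∉ S) (hv : v ∉ S) (huv : G.Adj u v) : ReachOutside G S u v :=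
  ⟨huv.toWalk, by simp [hu, hv]⟩

end ReachOutside

/-- The vertex set of the component of `G - S` containing `v`; it is empty when `v ∈ S`. -/
def componentOutside (G : SimpleGraph V) (S : Set V) (v : V) : Set V :=
  {u | ReachOutside G S u v}

lemma componentOutside_anti (hST : S ⊆ T) : componentOutside G T v ⊆ componentOutside G S v :=
  fun _ => ReachOutside.anti hST

lemma componentOutside_subset_of_inter_nonempty (hST : S ⊆ T)
    (h : (componentOutside G T u ∩ componentOutside G S v).Nonempty) :
    componentOutside G T u ⊆ componentOutside G S v := by
  obtain ⟨x, hxu, hxv⟩ := h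
  exact fun z hz => ((hz.trans hxu.symm).anti hST).trans hxv

lemma componentOutside_subset_of_closed {Q : Set V} (hv : v ∈ Q)
    (hQ : ∀ x ∈ componentOutside G S v, ∀ z ∈ componentOutside G S v,
      x ∈ Q → G.Adj x z → z ∈ Q) :
    componentOutside G S v ⊆ Q := by
  rintro u ⟨p, hp⟩
  induction p with
  | nil => exact hv
  | cons hadj p ih =>
    have hp' : ∀ y ∈ p.support, y ∉ S := fun y hy => hp y (by simp [hy])
    exact hQ _ ⟨p, hp'⟩ _ ⟨p.cons hadj, hp⟩ (ih hv hQ hp') hadj.symm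

end Components

section Weight

variable [Finite V] {G : SimpleGraph V} {w : V → ℝ} {A B C S T : Set V} {y z : V}

lemma setWeight_mono (hw : ∀ v, 0 ≤ w v) (hAB : A ⊆ B) : setWeight w A ≤ setWeight w B :=
  Finset.sum_le_sum_of_subset_of_nonneg (by simpa using hAB) fun v _ _ => hw v

lemma setWeight_singleton (w : V → ℝ) (v : V) : setWeight w {v} = w v := by
  simp [setWeight]

lemma setWeight_add_le_univ (hw : ∀ v, 0 ≤ w v) (hAB : Disjoint A B) :
    setWeight w A + setWeight w B ≤ setWeight w Set.univ := by
  classical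
  refine le_trans (le_of_eq ?_) (setWeight_mono hw (Set.subset_univ (A ∪ B)))
  rw [setWeight, setWeight, setWeight, Set.Finite.toFinset_union A.toFinite B.toFinite,
    Finset.sum_union (by simpa using hAB)]

/-- `A` carries strictly more than half of the total weight. A component of `G - S` is heavy
exactly when it witnesses that `S` is not a balanced separator. -/
def IsHeavy (w : V → ℝ) (A : Set V) : Prop :=
  setWeight w Set.univ / 2 < setWeight w A

namespace IsHeavy

lemma mono (hw : ∀ v, 0 ≤ w v) (hA : IsHeavy w A) (hAB : A ⊆ B) : IsHeavy w B :=
  hA.trans_le (setWeight_mono hw hAB)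

lemma inter_nonempty (hw : ∀ v, 0 ≤ w v) (hA : IsHeavy w A) (hB : IsHeavy w B) :
    (A ∩ B).Nonempty := by
  rw [← Set.not_disjoint_iff_nonempty_inter]
  intro hAB
  have hsum := setWeight_add_le_univ hw hAB
  unfold IsHeavy at hA hB
  linarith

lemma nonempty (hw : ∀ v, 0 ≤ w v) (hA : IsHeavy w A) : A.Nonempty :=
  (hA.inter_nonempty hw hA).left

lemma mem_componentOutside (hw : ∀ v, 0 ≤ w v) (hy : IsHeavy w (componentOutside G S y)) :
    y ∈ componentOutside G S y := by
  obtain ⟨x, hx⟩ := hy.nonempty hw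
  exact hx.symm.trans hx

lemma componentOutside_subset (hw : ∀ v, 0 ≤ w v) (hST : S ⊆ T)
    (hy : IsHeavy w (componentOutside G T y)) (hz : IsHeavy w (componentOutside G S z)) :
    componentOutside G T y ⊆ componentOutside G S z :=
  componentOutside_subset_of_inter_nonempty hST (hy.inter_nonempty hw hz)

end IsHeavy

lemma exists_isHeavy_componentOutside (hw : ∀ v, 0 ≤ w v) (hind : G.IsIndepSet Cᶜ)
    (hlight : ∀ v ∉ C, w v ≤ setWeight w Set.univ / 2) (hS : ¬ IsBalancedSep G w S) :
    ∃ y ∈ C, y ∉ S ∧ IsHeavy w (componentOutside G S y) := by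
  simp only [IsBalancedSep, not_forall, not_le] at hS
  obtain ⟨v, hvS, hv⟩ := hS
  change IsHeavy w (componentOutside G S v) at hv
  by_cases hvC : v ∈ C
  · exact ⟨v, hvC, hvS, hv⟩
  have hnbr : ∃ y, G.Adj v y ∧ y ∉ S := by
    by_contra! hvS'
    have hsub : componentOutside G S v ⊆ {v} := by
      refine componentOutside_subset_of_closed rfl ?_
      rintro x - z hz rfl hxz
      exact absurd (hvS' z hxz) hz.notMem_left
    exact (hlight v hvC).not_gt (setWeight_singleton w v ▸ hv.mono hw hsub)
  obtain ⟨y, hvy, hyS⟩ := hnbr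
  have hyC : y ∈ C := by
    by_contra hyC
    exact hind hvC hyC hvy.ne hvy
  exact ⟨y, hyC, hyS, hv.mono hw fun z hz => hz.trans (.of_adj hvS hyS hvy)⟩

end Weight

section Wheel

variable {G : SimpleGraph V}

lemma connected_induce_of_subset {A B : Set V} (hA : (G.induce A).Connected) (hAB : A ⊆ B)
    (hB : ∀ b ∈ B, b ∉ A → ∃ a ∈ A, G.Adj b a) : (G.induce B).Connected := by
  obtain ⟨⟨a₀, ha₀⟩⟩ := hA.nonempty
  have hreach (a : V) (ha : a ∈ A) :
      (G.induce B).Reachable ⟨a₀, hAB ha₀⟩ ⟨a, hAB ha⟩ :=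
    (hA.preconnected ⟨a₀, ha₀⟩ ⟨a, ha⟩).map (G.induceHomOfLE hAB).toHom
  refine (connected_iff_exists_forall_reachable _).2 ⟨⟨a₀, hAB ha₀⟩, ?_⟩
  rintro ⟨b, hb⟩
  by_cases hbA : b ∈ A
  · exact hreach b hbA
  · obtain ⟨a, ha, hba⟩ := hB b hb hbA
    exact (hreach a ha).trans (Adj.reachable hba.symm)

lemma connected_induce_image_of_ordConnected {f : ℕ → V} {s : Set ℕ} (hs : s.OrdConnected)
    (hne : s.Nonempty) (hf : ∀ a ∈ s, a + 1 ∈ s → G.Adj (f a) (f (a + 1))) :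
    (G.induce (f '' s)).Connected := by
  have hreach (a b : ℕ) (hab : a ≤ b) (ha : a ∈ s) (hb : b ∈ s) :
      (G.induce (f '' s)).Reachable ⟨f a, a, ha, rfl⟩ ⟨f b, b, hb, rfl⟩ := by
    induction b, hab using Nat.le_induction with
    | base => rfl
    | succ b hab ih =>
      have hbs : b ∈ s := hs.out ha hb ⟨hab, b.le_succ⟩
      exact (ih hbs).trans (Adj.reachable (hf b hbs hb))
  refine (connected_iff _).2 ⟨?_, (hne.image f).to_subtype⟩
  rintro ⟨_, a, ha, rfl⟩ ⟨_, b, hb, rfl⟩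
  rcases le_total a b with hab | hba
  · exact hreach a b hab ha hb
  · exact (hreach b a hba hb ha).symm

lemma zmod_eq_add_one_iff_val {ℓ : ℕ} (hℓ : 2 ≤ ℓ) (i j : ZMod ℓ) :
    j = i + 1 ↔ j.val = i.val + 1 ∨ i.val + 1 = ℓ ∧ j.val = 0 := by
  have : NeZero ℓ := ⟨by omega⟩
  have : Fact (1 < ℓ) := ⟨hℓ⟩
  have hi := i.val_lt
  have hj := j.val_lt
  rw [← (ZMod.val_injective ℓ).eq_iff, ZMod.val_add, ZMod.val_one]
  rcases Nat.lt_or_ge (i.val + 1) ℓ with h | h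
  · rw [Nat.mod_eq_of_lt h]; omega
  · obtain h : i.val + 1 = ℓ := by omega
    rw [h, Nat.mod_self]; omega

lemma wheel_adj_some_some_iff {ℓ : ℕ} (hℓ : 2 ≤ ℓ) {i j : ZMod ℓ} (hij : i.val < j.val) :
    (wheel ℓ).Adj (some i) (some j) ↔ j.val = i.val + 1 ∨ i.val = 0 ∧ j.val + 1 = ℓ := by
  have : NeZero ℓ := ⟨by omega⟩
  have hj := j.val_lt
  have hne : i ≠ j := fun h => hij.ne (congrArg ZMod.val h)
  have hadj : (wheel ℓ).Adj (some i) (some j) ↔ j = i + 1 ∨ i = j + 1 := by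
    simp [wheel, hne]
  rw [hadj, zmod_eq_add_one_iff_val hℓ, zmod_eq_add_one_iff_val hℓ]
  omega

lemma isInducedMinor_wheel_of_branchSets {ℓ : ℕ} (hℓ : 2 ≤ ℓ) {X : Set V} {Y : ℕ → Set V}
    (hX : (G.induce X).Connected) (hY : ∀ j < ℓ, (G.induce (Y j)).Connected)
    (hXY : ∀ j < ℓ, Disjoint X (Y j)) (hYY : ∀ i j, i < j → j < ℓ → Disjoint (Y i) (Y j))
    (hXYadj : ∀ j < ℓ, ∃ u ∈ X, ∃ v ∈ Y j, G.Adj u v)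
    (hYYadj : ∀ i j, i < j → j < ℓ →
      ((∃ u ∈ Y i, ∃ v ∈ Y j, G.Adj u v) ↔ j = i + 1 ∨ i = 0 ∧ j + 1 = ℓ)) :
    IsInducedMinor (wheel ℓ) G := by
  have : NeZero ℓ := ⟨by omega⟩
  have hsymm (A B : Set V) :
      (∃ u ∈ A, ∃ v ∈ B, G.Adj u v) ↔ ∃ u ∈ B, ∃ v ∈ A, G.Adj u v :=
    ⟨fun ⟨u, hu, v, hv, h⟩ => ⟨v, hv, u, hu, h.symm⟩,
      fun ⟨u, hu, v, hv, h⟩ => ⟨v, hv, u, hu, h.symm⟩⟩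
  have hrim {i j : ZMod ℓ} (hij : i.val < j.val) :
      (∃ u ∈ Y i.val, ∃ v ∈ Y j.val, G.Adj u v) ↔ (wheel ℓ).Adj (some i) (some j) := by
    rw [hYYadj _ _ hij j.val_lt, wheel_adj_some_some_iff hℓ hij]
  have hval {i j : ZMod ℓ} (hij : some i ≠ some j) : i.val < j.val ∨ j.val < i.val :=
    lt_or_gt_of_ne fun h => hij (congrArg some (ZMod.val_injective ℓ h))
  refine ⟨fun o => o.elim X fun i => Y i.val, ?_, ?_, ?_⟩
  · rintro (_ | i)
    exacts [hX, hY _ i.val_lt]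
  · rintro (_ | i) (_ | j) hij
    · exact absurd rfl hij
    · exact hXY _ j.val_lt
    · exact (hXY _ i.val_lt).symm
    · rcases hval hij with h | h
      exacts [hYY _ _ h j.val_lt, (hYY _ _ h i.val_lt).symm]
  · rintro (_ | i) (_ | j) hij
    · exact absurd rfl hij
    · exact iff_of_true (hXYadj _ j.val_lt) (by simp [wheel])
    · exact iff_of_true ((hsymm _ _).1 (hXYadj _ i.val_lt)) (by simp [wheel])
    · rcases hval hij with h | h
      · exact hrim h
      · rw [adj_comm, ← hrim h]
        exact hsymm _ _

/-- `q i, …, q (k - 1)` is, in this cyclic order, an induced cycle of `G`. Values of `q` outside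
the window `[i, k)` are irrelevant. -/
structure IsCycleSeq (G : SimpleGraph V) (i k : ℕ) (q : ℕ → V) : Prop where
  injOn : Set.InjOn q (Set.Ico i k)
  adj_iff : ∀ a b, i ≤ a → a < b → b < k → (G.Adj (q a) (q b) ↔ b = a + 1 ∨ a = i ∧ b + 1 = k)

lemma exists_monotone_labelling {ℓ i k : ℕ} {T : Finset ℕ} (hℓ : 0 < ℓ)
    (hT : ∀ t ∈ T, t ∈ Set.Ico i k) (hcard : ℓ ≤ T.card) :
    ∃ φ : ℕ → ℕ, Monotone φ ∧ φ i = 0 ∧ φ (k - 1) + 1 = ℓ ∧ (∀ a, φ (a + 1) ≤ φ a + 1) ∧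
      ∀ j < ℓ, ∃ t ∈ T, φ t = j ∧ (j + 1 < ℓ → φ (t + 1) = j + 1) := by
  let φ (a : ℕ) : ℕ := min (Nat.count (· ∈ T) a) (ℓ - 1)
  have hmono : Monotone φ := fun a b hab => min_le_min_right _ (Nat.count_monotone _ hab)
  have hfin : (Set.ofPred (· ∈ T)).Finite := T.finite_toSet
  have hfinT : hfin.toFinset = T := by ext; simp
  have hlabel : ∀ j < ℓ, ∃ t ∈ T, φ t = j ∧ (j + 1 < ℓ → φ (t + 1) = j + 1) := by
    intro j hj
    have hjT : j < hfin.toFinset.card := by rw [hfinT]; omega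
    have hcount : Nat.count (· ∈ T) (Nat.nth (· ∈ T) j) = j := Nat.count_nth fun _ => hjT
    have hmem : Nat.nth (· ∈ T) j ∈ T := Nat.nth_mem_of_lt_card hfin hjT
    refine ⟨_, hmem, ?_, fun _ => ?_⟩
    · simp only [φ, hcount]; omega
    · simp only [φ, Nat.count_succ, hcount, hmem, if_true]; omega
  refine ⟨φ, hmono, ?_, ?_, fun a => ?_, hlabel⟩
  · have hcount : Nat.count (· ∈ T) i = 0 := by
      rw [Nat.count_eq_card_filter_range, Finset.card_eq_zero, Finset.filter_eq_empty_iff]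
      exact fun t ht htT => (hT t htT).1.not_gt (Finset.mem_range.1 ht)
    simp only [φ, hcount, Nat.zero_min]
  · obtain ⟨t, ht, hφt, -⟩ := hlabel (ℓ - 1) (by omega)
    have hle : φ t ≤ φ (k - 1) := hmono (by have := (hT t ht).2; omega)
    have hmin : φ (k - 1) ≤ ℓ - 1 := min_le_right _ _
    omega
  · simp only [φ, Nat.count_succ]
    split_ifs <;> omega

lemma IsCycleSeq.exists_adj_iff_of_labelling {ℓ i k j j' : ℕ} {q : ℕ → V} {φ : ℕ → ℕ}
    (hq : IsCycleSeq G i k q) (hmono : Monotone φ) (hφi : φ i = 0) (hφk : φ (k - 1) + 1 = ℓ)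
    (hφsucc : ∀ a, φ (a + 1) ≤ φ a + 1)
    (hstep : ∀ j, j + 1 < ℓ → ∃ t ∈ Set.Ico i k, φ t = j ∧ φ (t + 1) = j + 1)
    (hjj' : j < j') (hj' : j' < ℓ) :
    (∃ u ∈ q '' (Set.Ico i k ∩ φ ⁻¹' {j}), ∃ v ∈ q '' (Set.Ico i k ∩ φ ⁻¹' {j'}), G.Adj u v) ↔
      j' = j + 1 ∨ j = 0 ∧ j' + 1 = ℓ := by
  constructor
  · rintro ⟨_, ⟨a, ⟨ha, rfl⟩, rfl⟩, _, ⟨b, ⟨hb, rfl⟩, rfl⟩, hadj⟩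
    rcases (hq.adj_iff a b ha.1 (hmono.reflect_lt hjj') hb.2).1 hadj with rfl | ⟨rfl, hbk⟩
    · have := hφsucc a
      omega
    · obtain rfl : b = k - 1 := by omega
      exact Or.inr ⟨hφi, hφk⟩
  · rintro (rfl | ⟨rfl, hj'ℓ⟩)
    · obtain ⟨t, ⟨hit, htk⟩, htj, hts⟩ := hstep j hj'
      have htk' : t + 1 < k := by
        by_contra htk'
        obtain rfl : t = k - 1 := by omega
        omega
      exact ⟨q t, ⟨t, ⟨⟨hit, htk⟩, htj⟩, rfl⟩, q (t + 1), ⟨t + 1, ⟨⟨by omega, htk'⟩, hts⟩, rfl⟩,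
        (hq.adj_iff _ _ hit t.lt_succ_self htk').2 (Or.inl rfl)⟩
    · have hik : i < k - 1 := hmono.reflect_lt (by omega)
      have hφlast : φ (k - 1) = j' := by omega
      exact ⟨q i, ⟨i, ⟨⟨le_rfl, by omega⟩, hφi⟩, rfl⟩,
        q (k - 1), ⟨k - 1, ⟨⟨hik.le, by omega⟩, hφlast⟩, rfl⟩,
        (hq.adj_iff _ _ le_rfl hik (by omega)).2 (Or.inr ⟨rfl, by omega⟩)⟩

-- Cut the rim into `ℓ` intervals, each containing an attachment of the hub `X`, and contract them.
lemma IsCycleSeq.isInducedMinor_wheel {ℓ i k : ℕ} {q : ℕ → V} (hq : IsCycleSeq G i k q)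
    (hℓ : 3 ≤ ℓ) {X : Set V} (hX : (G.induce X).Connected) (hqX : ∀ a ∈ Set.Ico i k, q a ∉ X)
    {T : Finset ℕ} (hT : ∀ t ∈ T, t ∈ Set.Ico i k ∧ ∃ x ∈ X, G.Adj x (q t))
    (hcard : ℓ ≤ T.card) : IsInducedMinor (wheel ℓ) G := by
  obtain ⟨φ, hmono, hφi, hφk, hφsucc, hlabel⟩ :=
    exists_monotone_labelling (by omega) (fun t ht => (hT t ht).1) hcard
  refine isInducedMinor_wheel_of_branchSets (Y := fun j => q '' (Set.Ico i k ∩ φ ⁻¹' {j}))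
    (by omega) hX (fun j hj => ?_) (fun j _ => ?_) (fun j j' hjj' _ => ?_) (fun j hj => ?_)
    (fun j j' => hq.exists_adj_iff_of_labelling hmono hφi hφk hφsucc fun j hj => ?_)
  · obtain ⟨t, ht, htj, -⟩ := hlabel j hj
    refine connected_induce_image_of_ordConnected
      (Set.ordConnected_Ico.inter (Set.ordConnected_singleton.preimage_mono hmono))
      ⟨t, (hT t ht).1, htj⟩ ?_
    rintro a ⟨⟨ha, -⟩, -⟩ ⟨⟨-, ha'⟩, -⟩
    exact (hq.adj_iff a (a + 1) ha a.lt_succ_self ha').2 (Or.inl rfl)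
  · rw [Set.disjoint_right]
    rintro _ ⟨a, ⟨ha, -⟩, rfl⟩
    exact hqX a ha
  · rw [Set.disjoint_left]
    rintro _ ⟨a, ⟨ha, rfl⟩, rfl⟩ ⟨b, ⟨hb, rfl⟩, hba⟩
    exact hjj'.ne (congrArg φ (hq.injOn ha hb hba.symm))
  · obtain ⟨t, ht, htj, -⟩ := hlabel j hj
    obtain ⟨htk, x, hx, hxt⟩ := hT t ht
    exact ⟨x, hx, q t, ⟨t, ⟨htk, htj⟩, rfl⟩, hxt⟩
  · obtain ⟨t, ht, htj, hts⟩ := hlabel j (by omega)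
    exact ⟨t, (hT t ht).1, htj, hts hj⟩

end Wheel

section Cycle

variable {G : SimpleGraph V} {C : Set V} {n : ℕ} {P : ℕ → V} {a b i : ℕ}

/-- `P` runs through the induced cycle `C` of length `n` again and again, one vertex per step.
Arcs of `C` are then images of intervals of `ℕ`, with no exception for those passing `P 0`. -/
structure IsCycleEnum (G : SimpleGraph V) (C : Set V) (n : ℕ) (P : ℕ → V) : Prop where
  three_le : 3 ≤ n
  range_eq : Set.range P = C
  eq_iff : ∀ a b, P a = P b ↔ a ≡ b [MOD n]
  adj_iff : ∀ a b, G.Adj (P a) (P b) ↔ b ≡ a + 1 [MOD n] ∨ a ≡ b + 1 [MOD n]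

lemma isCycleEnum_of_adj_succ (hC : ∀ x ∈ C, (G.neighborSet x ∩ C).ncard = 2) (hn : 3 ≤ n)
    (hrange : Set.range P = C) (heq : ∀ a b, P a = P b ↔ a ≡ b [MOD n])
    (hsucc : ∀ a, G.Adj (P a) (P (a + 1))) : IsCycleEnum G C n P := by
  have hmem (a : ℕ) : P a ∈ C := hrange ▸ Set.mem_range_self a
  have hpred (a : ℕ) : P (a + (n - 1) + 1) = P a := by
    rw [heq, add_assoc, Nat.sub_add_cancel (by omega)]
    exact Nat.add_modEq_right
  refine ⟨hn, hrange, heq, fun a b => ⟨fun hab => ?_, ?_⟩⟩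
  · have hne : P (a + 1) ≠ P (a + (n - 1)) := by
      rw [Ne, heq, Nat.ModEq.comm]
      intro h
      have hdvd := (Nat.modEq_iff_dvd' (by omega)).1 h.symm
      exact absurd (Nat.le_of_dvd (by omega) hdvd) (by omega)
    have hnbr : {P (a + 1), P (a + (n - 1))} = G.neighborSet (P a) ∩ C := by
      refine Set.eq_of_subset_of_ncard_le ?_ (by rw [hC _ (hmem a), Set.ncard_pair hne])
        (Set.finite_of_ncard_ne_zero (by rw [hC _ (hmem a)]; decide))
      rintro _ (rfl | rfl)
      · exact ⟨hsucc a, hmem _⟩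
      · exact ⟨(hpred a ▸ hsucc (a + (n - 1))).symm, hmem _⟩
    rcases hnbr.ge ⟨hab, hmem b⟩ with h | h
    · exact Or.inl ((heq b (a + 1)).1 h)
    · rw [Set.mem_singleton_iff, heq] at h
      exact Or.inr (((heq _ _).1 (hpred a)).symm.trans (h.symm.add_right 1))
  · rintro (h | h)
    · exact (heq b (a + 1)).2 h ▸ hsucc a
    · exact ((heq a (b + 1)).2 h ▸ hsucc b).symm

lemma exists_isCycle_forall_mem_support {W : Type*} [Finite W] {H : SimpleGraph W}
    (hconn : H.Connected) (hH : ∀ x, (H.neighborSet x).ncard = 2) :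
    ∃ (v : W) (p : H.Walk v v), p.IsCycle ∧ ∀ y, y ∈ p.support := by
  obtain ⟨v⟩ := hconn.nonempty
  have hcycles : H.IsCycles := fun x _ => hH x
  obtain ⟨p, hp, hverts⟩ := hcycles.exists_cycle_toSubgraph_verts_eq_connectedComponentSupp
    (c := H.connectedComponentMk v) rfl (Set.nonempty_of_ncard_ne_zero (by rw [hH]; decide))
  refine ⟨v, p, hp, fun y => ?_⟩
  rw [← Walk.mem_verts_toSubgraph, hverts]
  exact ConnectedComponent.sound (hconn.preconnected y v)

lemma ncard_neighborSet_induce (x : C) :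
    ((G.induce C).neighborSet x).ncard = (G.neighborSet x ∩ C).ncard := by
  rw [← Set.ncard_image_of_injective _ Subtype.val_injective]
  congr 1
  ext y
  simp [and_comm]

lemma IsInducedCycle.exists_isCycleEnum [Finite V] (hC : IsInducedCycle G C) :
    ∃ n P, IsCycleEnum G C n P := by
  obtain ⟨hconn, hdeg⟩ := hC
  obtain ⟨v, p, hp, hsupp⟩ := exists_isCycle_forall_mem_support hconn fun x =>
    (ncard_neighborSet_induce x).trans (hdeg x x.2)
  have hL := hp.three_le_length
  have hlt (a : ℕ) : a % p.length < p.length := Nat.mod_lt a (by omega)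
  have hwrap {a : ℕ} (ha : a ≤ p.length) : p.getVert (a % p.length) = p.getVert a := by
    rcases ha.lt_or_eq with h | rfl
    · rw [Nat.mod_eq_of_lt h]
    · simp
  refine ⟨p.length, fun a => p.getVert (a % p.length),
    isCycleEnum_of_adj_succ hdeg hL ?_ (fun a b => ?_) fun a => ?_⟩
  · refine Set.Subset.antisymm (Set.range_subset_iff.2 fun a => Subtype.coe_prop _) fun y hy => ?_
    obtain ⟨a, ha, haL⟩ := Walk.mem_support_iff_exists_getVert.1 (hsupp ⟨y, hy⟩)
    exact ⟨a, by simp only [hwrap haL, ha]⟩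
  · rw [Subtype.val_inj]
    have hmem (c : ℕ) : c % p.length ∈ {m | m ≤ p.length - 1} := Nat.le_sub_one_of_lt (hlt c)
    exact hp.getVert_injOn'.eq_iff (hmem a) (hmem b)
  · have hadj := p.adj_getVert_succ (hlt a)
    rwa [← hwrap (Nat.add_one_le_iff.2 (hlt a)), Nat.mod_add_mod] at hadj

namespace IsCycleEnum

lemma mem (hP : IsCycleEnum G C n P) (a : ℕ) : P a ∈ C :=
  hP.range_eq ▸ Set.mem_range_self a

lemma add_period (hP : IsCycleEnum G C n P) (a : ℕ) : P (a + n) = P a :=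
  (hP.eq_iff _ _).2 Nat.add_modEq_right

lemma adj_succ (hP : IsCycleEnum G C n P) (a : ℕ) : G.Adj (P a) (P (a + 1)) :=
  (hP.adj_iff _ _).2 (Or.inl rfl)

lemma injOn_Ico (hP : IsCycleEnum G C n P) (i : ℕ) : Set.InjOn P (Set.Ico i (i + n)) := by
  rintro a ⟨hia, hai⟩ b ⟨hib, hbi⟩ hab
  refine Nat.ModEq.eq_of_abs_lt ((hP.eq_iff a b).1 hab) (abs_lt.2 ?_)
  omega

lemma exists_index (hP : IsCycleEnum G C n P) (i : ℕ) {y : V} (hy : y ∈ C) :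
    ∃ a ∈ Set.Ico i (i + n), P a = y := by
  obtain ⟨b, rfl⟩ := hP.range_eq.ge hy
  have hb : b % n ∈ (Finset.Ico i (i + n)).image (· % n) := by
    rw [Nat.image_Ico_mod, Finset.mem_range]
    exact Nat.mod_lt b (by have := hP.three_le; omega)
  obtain ⟨a, ha, hab⟩ := Finset.mem_image.1 hb
  exact ⟨a, Finset.mem_Ico.1 ha, (hP.eq_iff a b).2 hab⟩

lemma adj_iff_of_lt (hP : IsCycleEnum G C n P) (hab : a < b) (hba : b < a + n) :
    G.Adj (P a) (P b) ↔ b = a + 1 ∨ b + 1 = a + n := by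
  have hinj := hP.injOn_Ico (a + 1)
  rw [hP.adj_iff, ← hP.eq_iff, ← hP.eq_iff, ← hP.add_period a,
    hinj.eq_iff ⟨hab, by omega⟩ ⟨le_rfl, by omega⟩,
    hinj.eq_iff ⟨by omega, by omega⟩ ⟨by omega, by omega⟩]
  omega

lemma isCycleSeq (hP : IsCycleEnum G C n P) (i : ℕ) : IsCycleSeq G i (i + n) P where
  injOn := hP.injOn_Ico i
  adj_iff a b hia hab hb := by
    rw [hP.adj_iff_of_lt hab (by omega)]
    omega

end IsCycleEnum

end Cycle

section Arcs

open Set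

variable {G : SimpleGraph V} {C S K : Set V} {n ℓ : ℕ} {P : ℕ → V} {w : V → ℝ}
  {a b c i j k m p q x lo hi : ℕ} {s t L R : Set ℕ} {u v y z : V}

/-- The vertices of `C` with index in `s`, together with their neighbours outside `C`. -/
def arcNbhd (G : SimpleGraph V) (C : Set V) (P : ℕ → V) (s : Set ℕ) : Set V :=
  {z | ∃ a ∈ s, z = P a ∨ z ∉ C ∧ G.Adj z (P a)}

/-- The ends of the arc `[i, j]`, and its vertices that have a common neighbour outside `C` with
the complementary arc. Deleting them cuts the open arc off from the complementary one. -/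
def arcSep (G : SimpleGraph V) (C : Set V) (n : ℕ) (P : ℕ → V) (i j : ℕ) : Set V :=
  P '' {a ∈ Icc i j |
    a = i ∨ a = j ∨ ∃ u ∉ C, G.Adj u (P a) ∧ u ∈ arcNbhd G C P (Ioo j (i + n))}

/-- The part of the neighbourhood of the open arc `(i, j)` that does not touch the complementary
open arc. -/
def arcInterior (G : SimpleGraph V) (C : Set V) (n : ℕ) (P : ℕ → V) (i j : ℕ) : Set V :=
  arcNbhd G C P (Ioo i j) \ arcNbhd G C P (Ioo j (i + n))

/-- `i` and `j` index consecutive neighbours of `v` along the cycle. -/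
structure IsGap (G : SimpleGraph V) (P : ℕ → V) (v : V) (i j : ℕ) : Prop where
  lt : i < j
  adj_left : G.Adj v (P i)
  adj_right : G.Adj v (P j)
  not_adj : ∀ a ∈ Ioo i j, ¬ G.Adj v (P a)

/-- An arc `[i, j]` of the cycle: either the whole cycle, cut open at `P i`, or an arc between
consecutive neighbours of a vertex outside `C`. -/
structure IsArc (G : SimpleGraph V) (C : Set V) (n : ℕ) (P : ℕ → V) (i j : ℕ) : Prop where
  lt : i < j
  le : j ≤ i + n
  eq_or_isGap : j = i + n ∨ ∃ v ∉ C, IsGap G P v i j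

lemma arcNbhd_mono (hst : s ⊆ t) : arcNbhd G C P s ⊆ arcNbhd G C P t :=
  fun _ ⟨a, ha, hz⟩ => ⟨a, hst ha, hz⟩

lemma mem_arcNbhd_of_adj (hz : z ∉ C) (ha : a ∈ s) (h : G.Adj z (P a)) : z ∈ arcNbhd G C P s :=
  ⟨a, ha, Or.inr ⟨hz, h⟩⟩

lemma exists_eq_of_mem_arcNbhd (h : z ∈ arcNbhd G C P s) (hz : z ∈ C) : ∃ a ∈ s, z = P a := by
  obtain ⟨a, ha, rfl | ⟨hzC, -⟩⟩ := h
  exacts [⟨a, ha, rfl⟩, absurd hz hzC]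

lemma exists_adj_of_mem_arcNbhd (hP : IsCycleEnum G C n P) (h : z ∈ arcNbhd G C P s)
    (hz : z ∉ C) : ∃ a ∈ s, G.Adj z (P a) := by
  obtain ⟨a, ha, rfl | ⟨-, hadj⟩⟩ := h
  exacts [absurd (hP.mem a) hz, ⟨a, ha, hadj⟩]

lemma arcSep_subset (hP : IsCycleEnum G C n P) : arcSep G C n P i j ⊆ C :=
  image_subset_iff.2 fun a _ => hP.mem a

lemma IsArc.left_mem_arcSep (hij : IsArc G C n P i j) : P i ∈ arcSep G C n P i j :=
  mem_image_of_mem P ⟨left_mem_Icc.2 hij.lt.le, Or.inl rfl⟩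

lemma IsArc.right_mem_arcSep (hij : IsArc G C n P i j) : P j ∈ arcSep G C n P i j :=
  mem_image_of_mem P ⟨right_mem_Icc.2 hij.lt.le, Or.inr (Or.inl rfl)⟩

lemma IsCycleEnum.isArc_zero (hP : IsCycleEnum G C n P) : IsArc G C n P 0 n :=
  ⟨by have := hP.three_le; omega, by omega, Or.inl (zero_add n).symm⟩

section WheelFree

lemma card_lt_of_adj (hP : IsCycleEnum G C n P) (hℓ : 3 ≤ ℓ)
    (hfree : ¬ IsInducedMinor (wheel ℓ) G) (hv : v ∉ C) {T : Finset ℕ}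
    (hT : ∀ t ∈ T, t ∈ Ico i (i + n) ∧ G.Adj v (P t)) : T.card < ℓ := by
  by_contra! hcard
  refine hfree ((hP.isCycleSeq i).isInducedMinor_wheel hℓ (X := {v}) (by simp) ?_
    (fun t ht => ⟨(hT t ht).1, v, rfl, (hT t ht).2⟩) hcard)
  rintro a - rfl
  exact hv (hP.mem a)

lemma IsGap.isCycleSeq (hP : IsCycleEnum G C n P) (hv : v ∉ C) (hgap : IsGap G P v i j)
    (hji : j + 1 < i + n) : IsCycleSeq G i (j + 2) fun a => if a ≤ j then P a else v where
  injOn := by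
    rintro a ⟨hia, haj⟩ b ⟨hib, hbj⟩ hab
    simp only at hab
    split_ifs at hab with ha hb hb
    · exact hP.injOn_Ico i ⟨hia, by omega⟩ ⟨hib, by omega⟩ hab
    · exact absurd (hab ▸ hP.mem a) hv
    · exact absurd (hab ▸ hP.mem b) hv
    · omega
  adj_iff a b hia hab hb := by
    have ha : a ≤ j := by omega
    rw [if_pos ha]
    split_ifs with hbj
    · rw [hP.adj_iff_of_lt hab (by omega)]
      omega
    · rw [adj_comm]
      refine ⟨fun h => ?_, ?_⟩
      · by_contra hne
        exact hgap.not_adj a ⟨by omega, by omega⟩ h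
      · rintro (h | ⟨rfl, -⟩)
        · obtain rfl : a = j := by omega
          exact hgap.adj_right
        · exact hgap.adj_left

lemma connected_induce_arcNbhd_diff (hP : IsCycleEnum G C n P) (hv : v ∉ C) (hij : i + 1 < j) :
    (G.induce (arcNbhd G C P (Ioo i j) \ {v})).Connected := by
  have harc : (G.induce (P '' Ioo i j)).Connected :=
    connected_induce_image_of_ordConnected ordConnected_Ioo ⟨i + 1, by simp, hij⟩
      fun a _ _ => hP.adj_succ a
  refine connected_induce_of_subset harc ?_ ?_
  · rintro _ ⟨a, ha, rfl⟩
    exact ⟨⟨a, ha, Or.inl rfl⟩, fun h => hv (h ▸ hP.mem a)⟩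
  · rintro z ⟨⟨a, ha, rfl | ⟨-, hadj⟩⟩, -⟩ hz
    · exact absurd (mem_image_of_mem P ha) hz
    · exact ⟨P a, mem_image_of_mem P ha, hadj⟩

-- The rim is the arc closed up through `v`; the hub is the neighbourhood of the complementary arc.
lemma IsGap.card_lt (hP : IsCycleEnum G C n P) (hℓ : 3 ≤ ℓ)
    (hfree : ¬ IsInducedMinor (wheel ℓ) G) (hv : v ∉ C) (hgap : IsGap G P v i j)
    (hji : j + 1 < i + n) {T : Finset ℕ}
    (hT : ∀ t ∈ T, t ∈ Icc i j ∧
      (t = i ∨ t = j ∨ ∃ u ∉ C, G.Adj u (P t) ∧ u ∈ arcNbhd G C P (Ioo j (i + n)))) :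
    T.card < ℓ := by
  by_contra! hcard
  refine hfree ((hgap.isCycleSeq hP hv hji).isInducedMinor_wheel hℓ
    (connected_induce_arcNbhd_diff hP hv hji) ?_ (fun t ht => ?_) hcard)
  · rintro a ⟨hia, -⟩
    split_ifs with ha
    · rintro ⟨h, -⟩
      obtain ⟨b, ⟨hjb, hbi⟩, hab⟩ := exists_eq_of_mem_arcNbhd h (hP.mem a)
      have := hP.injOn_Ico i ⟨hia, by omega⟩ ⟨by omega, hbi⟩ hab
      omega
    · simp
  obtain ⟨⟨hit, htj⟩, htS⟩ := hT t ht
  have hC {b : ℕ} (hb : b ∈ Ioo j (i + n)) : P b ∈ arcNbhd G C P (Ioo j (i + n)) \ {v} :=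
    ⟨⟨b, hb, Or.inl rfl⟩, fun h => hv (h ▸ hP.mem b)⟩
  refine ⟨⟨hit, by omega⟩, ?_⟩
  rw [if_pos htj]
  by_cases hti : t = i
  · refine ⟨P (i + n - 1), hC ⟨by omega, by omega⟩, ?_⟩
    have hadj := hP.adj_succ (i + n - 1)
    rw [Nat.sub_add_cancel (by omega), hP.add_period] at hadj
    exact hti ▸ hadj
  by_cases htj' : t = j
  · exact ⟨P (j + 1), hC ⟨j.lt_succ_self, hji⟩, htj' ▸ (hP.adj_succ j).symm⟩
  obtain ⟨u, -, hut, hu⟩ := (htS.resolve_left hti).resolve_left htj'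
  refine ⟨u, ⟨hu, ?_⟩, hut⟩
  rintro rfl
  exact hgap.not_adj t ⟨by omega, by omega⟩ hut

lemma IsArc.ncard_arcSep_le (hP : IsCycleEnum G C n P) (hℓ : 3 ≤ ℓ)
    (hfree : ¬ IsInducedMinor (wheel ℓ) G) (hij : IsArc G C n P i j) :
    (arcSep G C n P i j).ncard ≤ ℓ - 1 := by
  classical
  rcases Nat.lt_or_ge (j + 1) (i + n) with hji | hji
  · obtain ⟨v, hv, hgap⟩ := hij.eq_or_isGap.resolve_left (by omega)
    let T := (Finset.Icc i j).filter fun a =>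
      a = i ∨ a = j ∨ ∃ u ∉ C, G.Adj u (P a) ∧ u ∈ arcNbhd G C P (Ioo j (i + n))
    have hT : arcSep G C n P i j = T.image P := by
      simp [T, arcSep]
    rw [hT, ncard_coe_finset]
    refine Finset.card_image_le.trans (Nat.le_sub_one_of_lt ?_)
    refine hgap.card_lt hP hℓ hfree hv hji fun t ht => ?_
    simpa [T] using ht
  · have hsub : arcSep G C n P i j ⊆ {P i, P j} := by
      rintro _ ⟨a, ⟨-, rfl | rfl | ⟨u, -, -, b, hb, -⟩⟩, rfl⟩
      · simp
      · simp
      · have := hb.1.trans_le (Nat.le_sub_one_of_lt hb.2)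
        omega
    have := (ncard_le_ncard hsub).trans (ncard_insert_le (P i) {P j})
    rw [ncard_singleton] at this
    omega

end WheelFree

lemma componentOutside_subset_arcNbhd (hind : G.IsIndepSet Cᶜ) (ha : a ∈ L)
    (hcover : componentOutside G S (P a) ∩ C ⊆ P '' (L ∪ R))
    (hadj : ∀ a ∈ L, ∀ b ∈ R, ¬ G.Adj (P a) (P b))
    (hnbr : ∀ u ∈ componentOutside G S (P a), u ∉ C → ∀ a ∈ L, ∀ b ∈ R,
      G.Adj u (P a) → ¬ G.Adj u (P b)) :
    componentOutside G S (P a) ⊆ arcNbhd G C P L := by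
  refine componentOutside_subset_of_closed ⟨a, ha, Or.inl rfl⟩ fun y hy z hz hyL hyz => ?_
  by_cases hzC : z ∈ C
  · obtain ⟨b, hb | hb, rfl⟩ := hcover ⟨hz, hzC⟩
    · exact ⟨b, hb, Or.inl rfl⟩
    obtain ⟨c, hc, rfl | ⟨hyC, hyc⟩⟩ := hyL
    · exact absurd hyz (hadj c hc b hb)
    · exact absurd hyz (hnbr y hy hyC c hc b hb hyc)
  · have hyC : y ∈ C := by
      by_contra hyC
      exact hind hyC hzC hyz.ne hyz
    obtain ⟨c, hc, rfl⟩ := exists_eq_of_mem_arcNbhd hyL hyC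
    exact mem_arcNbhd_of_adj hzC hc hyz.symm

lemma disjoint_arcNbhd (hP : IsCycleEnum G C n P) (hK : K ⊆ arcNbhd G C P L)
    (hne : ∀ a ∈ L, ∀ b ∈ R, P a ≠ P b)
    (hnbr : ∀ u ∈ K, u ∉ C → ∀ a ∈ L, ∀ b ∈ R, G.Adj u (P a) → ¬ G.Adj u (P b)) :
    Disjoint K (arcNbhd G C P R) := by
  refine disjoint_left.2 fun z hz hzR => ?_
  by_cases hzC : z ∈ C
  · obtain ⟨a, ha, rfl⟩ := exists_eq_of_mem_arcNbhd (hK hz) hzC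
    obtain ⟨b, hb, hab⟩ := exists_eq_of_mem_arcNbhd hzR hzC
    exact hne a ha b hb hab
  · obtain ⟨a, ha, hza⟩ := exists_adj_of_mem_arcNbhd hP (hK hz) hzC
    obtain ⟨b, hb, hzb⟩ := exists_adj_of_mem_arcNbhd hP hzR hzC
    exact hnbr z hz hzC a ha b hb hza hzb

lemma IsCycleEnum.not_adj_of_Ioo (hP : IsCycleEnum G C n P) (hpq : p ≤ q) (hk : k ≤ i + n) :
    ∀ a ∈ Ioo i p, ∀ b ∈ Ioo q k, ¬ G.Adj (P a) (P b) := by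
  rintro a ⟨hia, hap⟩ b ⟨hqb, hbk⟩
  rw [hP.adj_iff_of_lt (by omega) (by omega)]
  omega

lemma IsCycleEnum.ne_of_Ico_of_Ioo (hP : IsCycleEnum G C n P) (hpq : p ≤ q + 1) (hk : k ≤ i + n) :
    ∀ a ∈ Ico i p, ∀ b ∈ Ioo q k, P a ≠ P b := by
  rintro a ⟨hia, hap⟩ b ⟨hqb, hbk⟩ hab
  have := hP.injOn_Ico i ⟨hia, by omega⟩ ⟨by omega, by omega⟩ hab
  omega

lemma IsArc.componentOutside_subset_arcInterior (hP : IsCycleEnum G C n P)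
    (hind : G.IsIndepSet Cᶜ) (hij : IsArc G C n P i j) (ha : a ∈ Ioo i j) :
    componentOutside G (arcSep G C n P i j) (P a) ⊆ arcInterior G C n P i j := by
  rcases (componentOutside G (arcSep G C n P i j) (P a)).eq_empty_or_nonempty with hK | ⟨z, hz⟩
  · exact hK ▸ empty_subset _
  let L : Set ℕ := {b ∈ Ioo i j | P b ∉ arcSep G C n P i j}
  have hcover : componentOutside G (arcSep G C n P i j) (P a) ∩ C ⊆
      P '' (L ∪ Ioo j (i + n)) := by
    rintro y ⟨hy, hyC⟩
    obtain ⟨b, ⟨hib, hbi⟩, rfl⟩ := hP.exists_index i hyC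
    have hbi' : b ≠ i := fun h => hy.notMem_left (h ▸ hij.left_mem_arcSep)
    have hbj : b ≠ j := fun h => hy.notMem_left (h ▸ hij.right_mem_arcSep)
    rcases lt_or_ge b j with hb | hb
    · exact ⟨b, Or.inl ⟨⟨by omega, hb⟩, hy.notMem_left⟩, rfl⟩
    · exact ⟨b, Or.inr ⟨by omega, hbi⟩, rfl⟩
  have hnbr : ∀ u ∈ componentOutside G (arcSep G C n P i j) (P a), u ∉ C →
      ∀ a ∈ L, ∀ b ∈ Ioo j (i + n), G.Adj u (P a) → ¬ G.Adj u (P b) := by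
    rintro u - hu c ⟨hc, hcS⟩ b hb huc hub
    exact hcS ⟨c, ⟨Ioo_subset_Icc_self hc,
      Or.inr (Or.inr ⟨u, hu, huc, mem_arcNbhd_of_adj hu hb hub⟩)⟩, rfl⟩
  have hsub := componentOutside_subset_arcNbhd hind (L := L) ⟨ha, hz.symm.notMem_left⟩ hcover
    (fun c hc => hP.not_adj_of_Ioo le_rfl le_rfl c hc.1) hnbr
  refine subset_sdiff.2 ⟨hsub.trans (arcNbhd_mono (sep_subset _ _)), ?_⟩
  exact disjoint_arcNbhd hP hsub (fun c hc =>
    hP.ne_of_Ico_of_Ioo (Nat.le_succ j) le_rfl c (Ioo_subset_Ico_self hc.1)) hnbr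

/-- `u` is a vertex outside `C` in the interior of the arc `[i, j]`, with neighbours at indices
`lo ≤ x` and `hi > x` on either side of a cut of that arc. -/
structure IsCrossing (G : SimpleGraph V) (C : Set V) (n : ℕ) (P : ℕ → V) (i j x : ℕ)
    (u : V) (lo hi : ℕ) : Prop where
  notMem : u ∉ C
  mem_arcInterior : u ∈ arcInterior G C n P i j
  lo_mem : lo ∈ Icc i x
  hi_mem : hi ∈ Ioc x j
  adj_lo : G.Adj u (P lo)
  adj_hi : G.Adj u (P hi)

/-- A crossing whose span `hi - lo` is as large as possible. -/
structure IsMaxCrossing (G : SimpleGraph V) (C : Set V) (n : ℕ) (P : ℕ → V) (i j x : ℕ)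
    (u : V) (lo hi : ℕ) : Prop extends IsCrossing G C n P i j x u lo hi where
  span_le : ∀ v a b, IsCrossing G C n P i j x v a b → b - a ≤ hi - lo

lemma exists_isMaxCrossing (h : ∃ u lo hi, IsCrossing G C n P i j x u lo hi) :
    ∃ u lo hi, IsMaxCrossing G C n P i j x u lo hi := by
  obtain ⟨u₀, lo₀, hi₀, h₀⟩ := h
  obtain ⟨⟨u, lo, hi⟩, hmem, hmin⟩ := exists_minimalFor_of_wellFoundedLT
    (fun c : V × ℕ × ℕ => IsCrossing G C n P i j x c.1 c.2.1 c.2.2)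
    (fun c => j - (c.2.2 - c.2.1)) ⟨⟨u₀, lo₀, hi₀⟩, h₀⟩
  refine ⟨u, lo, hi, hmem, fun v a b hv => ?_⟩
  have hle := hmin (j := (v, a, b)) hv
  have hj := hmem.hi_mem.2
  have hb := hv.hi_mem.2
  simp only at hle hmem
  omega

lemma IsMaxCrossing.not_adj (hP : IsCycleEnum G C n P) (hu : IsMaxCrossing G C n P i j x u lo hi) :
    ∀ t ∈ Ioo hi (lo + n), ¬ G.Adj u (P t) := by
  rintro t ⟨hit, htlo⟩ hut
  have hlox := hu.lo_mem.2
  have hxhi := hu.hi_mem.1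
  rcases Nat.lt_or_ge j t with hjt | htj
  · rcases Nat.lt_or_ge t (i + n) with hti | hit
    · exact hu.mem_arcInterior.2 (mem_arcNbhd_of_adj hu.notMem ⟨hjt, hti⟩ hut)
    · have hspan := hu.span_le u (t - n) hi ⟨hu.notMem, hu.mem_arcInterior,
        ⟨by omega, by omega⟩, hu.hi_mem, ?_, hu.adj_hi⟩
      · omega
      · rwa [← hP.add_period, Nat.sub_add_cancel (by omega)]
  · have hspan := hu.span_le u lo t
      ⟨hu.notMem, hu.mem_arcInterior, hu.lo_mem, ⟨by omega, htj⟩, hu.adj_lo, hut⟩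
    omega

lemma IsMaxCrossing.eq_of_isGap (hP : IsCycleEnum G C n P)
    (hu : IsMaxCrossing G C n P i j x u lo hi) (hgap : IsGap G P u a b) (ha : hi ≤ a)
    (hb : b ≤ hi + n) (hlen : j - i ≤ b - a) : a = hi ∧ b = lo + n := by
  have hlt := hgap.lt
  have hilo := hu.lo_mem.1
  have hhij := hu.hi_mem.2
  have hulo : G.Adj u (P (lo + n)) := (hP.add_period lo).symm ▸ hu.adj_lo
  rcases Nat.lt_or_ge a (lo + n) with halo | hloa
  · have hahi : a = hi := by
      by_contra hne
      exact hu.not_adj hP a ⟨by omega, halo⟩ hgap.adj_left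
    refine ⟨hahi, le_antisymm ?_ ?_⟩
    · by_contra! hlt
      exact hgap.not_adj (lo + n) ⟨halo, hlt⟩ hulo
    · by_contra! hlt
      exact hu.not_adj hP b ⟨by omega, hlt⟩ hgap.adj_right
  · obtain ⟨t, ⟨hit, htj⟩, hut⟩ := exists_adj_of_mem_arcNbhd hP hu.mem_arcInterior.1 hu.notMem
    have hut' : G.Adj u (P (t + n)) := (hP.add_period t).symm ▸ hut
    exact absurd hut' (hgap.not_adj (t + n) ⟨by omega, by omega⟩)

lemma exists_isGap_right (hP : IsCycleEnum G C n P) (hc : G.Adj u (P c)) (ha : a ∈ Ico c (c + n))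
    (hua : G.Adj u (P a)) : ∃ b ≤ c + n, IsGap G P u a b := by
  classical
  have hex : ∃ b, a < b ∧ G.Adj u (P b) := ⟨c + n, ha.2, (hP.add_period c).symm ▸ hc⟩
  obtain ⟨hlt, hadj⟩ := Nat.find_spec hex
  refine ⟨Nat.find hex, Nat.find_min' hex ⟨ha.2, (hP.add_period c).symm ▸ hc⟩, hlt, hua, hadj, ?_⟩
  exact fun t ht hut => Nat.find_min hex ht.2 ⟨ht.1, hut⟩

lemma exists_last_adj (hc : G.Adj u (P c)) (hcm : c ≤ m) :
    ∃ a ∈ Icc c m, G.Adj u (P a) ∧ ∀ t ∈ Ioc a m, ¬ G.Adj u (P t) := by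
  classical
  refine ⟨Nat.findGreatest (fun a => G.Adj u (P a)) m,
    ⟨Nat.le_findGreatest hcm hc, Nat.findGreatest_le m⟩,
    Nat.findGreatest_spec (P := fun a => G.Adj u (P a)) hcm hc, fun t ht => ?_⟩
  exact Nat.findGreatest_is_greatest ht.1 ht.2

section Heavy

variable [Finite V]

/-- An arc whose interior meets a heavy component of `G - arcSep`. -/
structure IsHeavyArc [Finite V] (G : SimpleGraph V) (C : Set V) (n : ℕ) (P : ℕ → V) (w : V → ℝ)
    (i j : ℕ) : Prop extends IsArc G C n P i j where
  exists_isHeavy : ∃ a ∈ Ioo i j, IsHeavy w (componentOutside G (arcSep G C n P i j) (P a))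

lemma isHeavyArc_zero (hP : IsCycleEnum G C n P) (hy : y ∈ C) (hyS : y ∉ arcSep G C n P 0 n)
    (hheavy : IsHeavy w (componentOutside G (arcSep G C n P 0 n) y)) :
    IsHeavyArc G C n P w 0 n := by
  obtain ⟨a, ⟨-, han⟩, rfl⟩ := hP.exists_index 0 hy
  have ha0 : a ≠ 0 := fun h => hyS (h ▸ hP.isArc_zero.left_mem_arcSep)
  exact ⟨hP.isArc_zero, a, ⟨by omega, by omega⟩, hheavy⟩

lemma exists_isHeavyArc_forall_length_le (h : IsHeavyArc G C n P w a b) :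
    ∃ i j, IsHeavyArc G C n P w i j ∧ ∀ i' j', IsHeavyArc G C n P w i' j' → j - i ≤ j' - i' := by
  obtain ⟨⟨i, j⟩, hij, hmin⟩ := exists_minimalFor_of_wellFoundedLT
    (fun c : ℕ × ℕ => IsHeavyArc G C n P w c.1 c.2) (fun c => c.2 - c.1) ⟨(a, b), h⟩
  refine ⟨i, j, hij, fun i' j' h' => ?_⟩
  exact (le_total _ _).elim id (hmin (j := (i', j')) h')

lemma IsHeavyArc.componentOutside_subset_arcInterior (hP : IsCycleEnum G C n P)
    (hw : ∀ v, 0 ≤ w v) (hind : G.IsIndepSet Cᶜ) (hij : IsHeavyArc G C n P w i j)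
    (hS : arcSep G C n P i j ⊆ S) (hy : IsHeavy w (componentOutside G S y)) :
    componentOutside G S y ⊆ arcInterior G C n P i j := by
  obtain ⟨a, ha, haw⟩ := hij.exists_isHeavy
  exact (hy.componentOutside_subset hw hS haw).trans
    (hij.toIsArc.componentOutside_subset_arcInterior hP hind ha)

lemma IsHeavyArc.isHeavy_arcNbhd (hP : IsCycleEnum G C n P) (hw : ∀ v, 0 ≤ w v)
    (hind : G.IsIndepSet Cᶜ) (hij : IsHeavyArc G C n P w i j) :
    IsHeavy w (arcNbhd G C P (Ioo i j)) := by
  obtain ⟨a, -, haw⟩ := hij.exists_isHeavy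
  exact haw.mono hw <| (hij.componentOutside_subset_arcInterior hP hw hind Subset.rfl haw).trans
    sdiff_subset

/-- Cut the arc starting at index `i` just before its median index `x`, or just after it: the
piece `[i, x)` has a light neighbourhood, the piece `[i, x]` a heavy one. -/
structure IsMedian (G : SimpleGraph V) (C : Set V) (P : ℕ → V) (w : V → ℝ) (i x : ℕ) : Prop where
  not_isHeavy : ¬ IsHeavy w (arcNbhd G C P (Ico i x))
  isHeavy : IsHeavy w (arcNbhd G C P (Ico i (x + 1)))

lemma exists_isMedian (hw : ∀ v, 0 ≤ w v) (h : IsHeavy w (arcNbhd G C P (Ioo i j))) :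
    ∃ x, IsMedian G C P w i x := by
  classical
  have hex : ∃ m, IsHeavy w (arcNbhd G C P (Ico i m)) :=
    ⟨j, h.mono hw (arcNbhd_mono Ioo_subset_Ico_self)⟩
  obtain ⟨-, a, ⟨hia, ha⟩, -⟩ := (Nat.find_spec hex).nonempty hw
  refine ⟨Nat.find hex - 1, Nat.find_min hex (by omega), ?_⟩
  rw [Nat.sub_add_cancel (by omega)]
  exact Nat.find_spec hex

-- A component on the left of the median lies in the neighbourhood of the light piece `[i, x)`; one
-- on the right misses the neighbourhood of the heavy piece `[i, x]`.
lemma IsMedian.not_isHeavy_componentOutside (hP : IsCycleEnum G C n P) (hw : ∀ v, 0 ≤ w v)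
    (hind : G.IsIndepSet Cᶜ) (hx : IsMedian G C P w i x) (hpx : p ≤ x) (hxq : x < q)
    (hj : j ≤ i + n) (hy : y ∈ C)
    (hcover : componentOutside G S y ∩ C ⊆ P '' (Ioo i p ∪ Ioo q j))
    (hnbr : ∀ u ∈ componentOutside G S y, u ∉ C → ∀ a ∈ Ico i (x + 1), ∀ b ∈ Ioo q j,
      G.Adj u (P a) → ¬ G.Adj u (P b)) :
    ¬ IsHeavy w (componentOutside G S y) := by
  intro hheavy
  have hnadj := hP.not_adj_of_Ioo (hpx.trans hxq.le) hj
  have hsub : Ioo i p ⊆ Ico i x := fun a ha => ⟨ha.1.le, ha.2.trans_le hpx⟩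
  have hsub' : Ioo i p ⊆ Ico i (x + 1) := hsub.trans (Ico_subset_Ico_right x.le_succ)
  obtain ⟨a, ha | ha, rfl⟩ := hcover ⟨hheavy.mem_componentOutside hw, hy⟩
  · have hleft := componentOutside_subset_arcNbhd hind ha hcover hnadj
      fun u hu huC a ha => hnbr u hu huC a (hsub' ha)
    exact hx.not_isHeavy (hheavy.mono hw (hleft.trans (arcNbhd_mono hsub)))
  · have hright := componentOutside_subset_arcNbhd hind ha (union_comm _ _ ▸ hcover)
      (fun b hb a ha hba => hnadj a ha b hb hba.symm)
      fun u hu huC b hb a ha hub hua => hnbr u hu huC a (hsub' ha) b hb hua hub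
    have hdisj := disjoint_arcNbhd hP (R := Ico i (x + 1)) hright
      (fun b hb a ha => (hP.ne_of_Ico_of_Ioo (by omega) hj a ha b hb).symm)
      fun u hu huC b hb a ha hub hua => hnbr u hu huC a ha b hb hua hub
    exact not_disjoint_iff_nonempty_inter.2 (hheavy.inter_nonempty hw hx.isHeavy) hdisj

lemma IsHeavyArc.exists_isCrossing (hP : IsCycleEnum G C n P) (hw : ∀ v, 0 ≤ w v)
    (hind : G.IsIndepSet Cᶜ) (hij : IsHeavyArc G C n P w i j) (hx : IsMedian G C P w i x)
    (hS : arcSep G C n P i j ∪ {P x, P (x + 1)} ⊆ S) (hy : y ∈ C)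
    (hheavy : IsHeavy w (componentOutside G S y)) :
    ∃ u lo hi, IsCrossing G C n P i j x u lo hi := by
  by_contra! hno
  have hK := hij.componentOutside_subset_arcInterior hP hw hind (union_subset_iff.1 hS).1 hheavy
  refine hx.not_isHeavy_componentOutside hP hw hind le_rfl x.lt_succ_self hij.le hy ?_ ?_ hheavy
  · rintro z ⟨hz, hzC⟩
    obtain ⟨t, ⟨hit, htj⟩, rfl⟩ := exists_eq_of_mem_arcNbhd (hK hz).1 hzC
    have htx : t ≠ x := fun h => hz.notMem_left (hS (by simp [h]))
    have htx' : t ≠ x + 1 := fun h => hz.notMem_left (hS (by simp [h]))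
    rcases lt_or_gt_of_ne htx with h | h
    · exact ⟨t, Or.inl ⟨hit, h⟩, rfl⟩
    · exact ⟨t, Or.inr ⟨by omega, htj⟩, rfl⟩
  · rintro u hu huC a ⟨hia, hax⟩ b ⟨hxb, hbj⟩ hua hub
    exact hno u a b ⟨huC, hK hu, ⟨hia, by omega⟩, ⟨by omega, hbj.le⟩, hua, hub⟩

lemma exists_isHeavyArc_isGap (hP : IsCycleEnum G C n P) (hw : ∀ v, 0 ≤ w v) (hℓ : 3 ≤ ℓ)
    (hfree : ¬ IsInducedMinor (wheel ℓ) G) (hu : u ∉ C) (hc : G.Adj u (P c)) :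
    ∃ S ⊆ C, S.ncard ≤ (ℓ - 1) ^ 2 ∧
      ∀ y ∈ C, y ∉ S → IsHeavy w (componentOutside G S y) →
        ∃ a b, c ≤ a ∧ b ≤ c + n ∧ IsHeavyArc G C n P w a b ∧ IsGap G P u a b := by
  classical
  choose! next hnext_le hnext using fun a => exists_isGap_right (a := a) hP hc
  let N := (Finset.Ico c (c + n)).filter fun a => G.Adj u (P a)
  have hN {a : ℕ} : a ∈ N ↔ a ∈ Ico c (c + n) ∧ G.Adj u (P a) := by simp [N]
  have harc {a : ℕ} (ha : a ∈ N) : IsArc G C n P a (next a) := by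
    obtain ⟨haI, hua⟩ := hN.1 ha
    exact ⟨(hnext a haI hua).lt, (hnext_le a haI hua).trans (by have := haI.1; omega),
      Or.inr ⟨u, hu, hnext a haI hua⟩⟩
  refine ⟨⋃ a ∈ N, arcSep G C n P a (next a), ?_, ?_, fun y hy hyS hheavy => ?_⟩
  · exact iUnion₂_subset fun a _ => arcSep_subset hP
  · have hNcard : N.card ≤ ℓ - 1 :=
      Nat.le_sub_one_of_lt (card_lt_of_adj hP hℓ hfree hu fun a ha => hN.1 ha)
    calc (⋃ a ∈ N, arcSep G C n P a (next a)).ncard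
        ≤ ∑ a ∈ N, (arcSep G C n P a (next a)).ncard := N.set_ncard_biUnion_le _
      _ ≤ N.card * (ℓ - 1) := Finset.sum_le_card_nsmul _ _ _ fun a ha =>
          (harc ha).ncard_arcSep_le hP hℓ hfree
      _ ≤ (ℓ - 1) ^ 2 := by rw [sq]; exact Nat.mul_le_mul_right _ hNcard
  · obtain ⟨m, hm, rfl⟩ := hP.exists_index c hy
    obtain ⟨a, ⟨hca, ham⟩, hua, hlast⟩ := exists_last_adj hc hm.1
    have haI : a ∈ Ico c (c + n) := ⟨hca, ham.trans_lt hm.2⟩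
    have haN : a ∈ N := hN.2 ⟨haI, hua⟩
    have hgap := hnext a haI hua
    have hsub : arcSep G C n P a (next a) ⊆ ⋃ a ∈ N, arcSep G C n P a (next a) :=
      subset_biUnion_of_mem (u := fun a => arcSep G C n P a (next a)) haN
    have ham' : a ≠ m := fun h => hyS (hsub (h ▸ (harc haN).left_mem_arcSep))
    have hmb : m < next a := by
      by_contra! hbm
      exact hlast (next a) ⟨hgap.lt, hbm⟩ hgap.adj_right
    exact ⟨a, next a, hca, hnext_le a haI hua, ⟨harc haN, m, ⟨by omega, hmb⟩,
      hheavy.mono hw (componentOutside_anti hsub)⟩, hgap⟩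

lemma IsMaxCrossing.not_isHeavy_componentOutside (hP : IsCycleEnum G C n P) (hw : ∀ v, 0 ≤ w v)
    (hind : G.IsIndepSet Cᶜ) (hij : IsHeavyArc G C n P w i j) (hx : IsMedian G C P w i x)
    (hu : IsMaxCrossing G C n P i j x u lo hi) (harc : IsHeavyArc G C n P w hi (lo + n))
    (hS : arcSep G C n P i j ∪ arcSep G C n P hi (lo + n) ⊆ S) (hy : y ∈ C) :
    ¬ IsHeavy w (componentOutside G S y) := by
  intro hheavy
  obtain ⟨hS₁, hS₂⟩ := union_subset_iff.1 hS
  have hK₁ := hij.componentOutside_subset_arcInterior hP hw hind hS₁ hheavy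
  have hK₂ := harc.componentOutside_subset_arcInterior hP hw hind hS₂ hheavy
  have hlox := hu.lo_mem.2
  have hxhi := hu.hi_mem.1
  have hlt := harc.lt
  refine hx.not_isHeavy_componentOutside hP hw hind hlox hxhi hij.le hy ?_ ?_ hheavy
  · rintro z ⟨hz, hzC⟩
    obtain ⟨t, ⟨hit, htj⟩, rfl⟩ := exists_eq_of_mem_arcNbhd (hK₁ hz).1 hzC
    obtain ⟨s, ⟨hhis, hslo⟩, hts⟩ := exists_eq_of_mem_arcNbhd (hK₂ hz).1 hzC
    have hout : ¬ (lo ≤ t ∧ t ≤ hi) := by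
      rintro ⟨hlot, hthi⟩
      have := hP.injOn_Ico lo ⟨hlot, by omega⟩ ⟨by omega, hslo⟩ hts
      omega
    rcases Nat.lt_or_ge t lo with h | h
    · exact ⟨t, Or.inl ⟨hit, h⟩, rfl⟩
    · exact ⟨t, Or.inr ⟨by omega, htj⟩, rfl⟩
  · rintro v hv hvC a ⟨hia, hax⟩ b ⟨hhib, hbj⟩ hva hvb
    have hspan := hu.span_le v a b
      ⟨hvC, hK₁ hv, ⟨hia, by omega⟩, ⟨by omega, hbj.le⟩, hva, hvb⟩
    have hva' : G.Adj v (P (a + n)) := (hP.add_period a).symm ▸ hva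
    exact (hK₂ hv).2 (mem_arcNbhd_of_adj hvC ⟨by omega, by omega⟩ hva')

end Heavy

end Arcs

theorem no_big_components_general [Finite V] {G : SimpleGraph V} {ℓ : ℕ} (hℓ : 3 ≤ ℓ)
    (hfree : ¬ IsInducedMinor (wheel ℓ) G) {w : V → ℝ} (hw : ∀ v, 0 ≤ w v) {C : Set V}
    (hC : IsInducedCycle G C) (hind : G.IsIndepSet Cᶜ)
    (hlight : ∀ v ∉ C, w v ≤ setWeight w Set.univ / 2) :
    ∃ S ⊆ C, S.ncard ≤ (ℓ - 1) ^ 2 ∧ IsBalancedSep G w S := by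
  by_contra! hno
  have hbig {S : Set V} (hSC : S ⊆ C) (hS : S.ncard ≤ (ℓ - 1) ^ 2) :
      ∃ y ∈ C, y ∉ S ∧ IsHeavy w (componentOutside G S y) :=
    exists_isHeavy_componentOutside hw hind hlight (hno S hSC hS)
  obtain ⟨n, P, hP⟩ := hC.exists_isCycleEnum
  have hsep {i j : ℕ} (hij : IsArc G C n P i j) {T : Set V} (hTC : T ⊆ C) (hT : T.ncard ≤ ℓ - 1) :
      ∃ y ∈ C, y ∉ arcSep G C n P i j ∪ T ∧
        IsHeavy w (componentOutside G (arcSep G C n P i j ∪ T) y) := by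
    refine hbig (Set.union_subset (arcSep_subset hP) hTC) ((Set.ncard_union_le _ _).trans ?_)
    have hle := hij.ncard_arcSep_le hP hℓ hfree
    have hsq : 2 * (ℓ - 1) ≤ (ℓ - 1) ^ 2 := by
      rw [sq]
      exact Nat.mul_le_mul_right _ (by omega)
    omega
  obtain ⟨y, hy, hyS, hheavy⟩ := hsep hP.isArc_zero (Set.empty_subset C) (by simp)
  rw [Set.union_empty] at hyS hheavy
  obtain ⟨i, j, hij, hmin⟩ := exists_isHeavyArc_forall_length_le (isHeavyArc_zero hP hy hyS hheavy)
  obtain ⟨x, hx⟩ := exists_isMedian hw (hij.isHeavy_arcNbhd hP hw hind)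
  obtain ⟨y, hy, -, hheavy⟩ := hsep hij.toIsArc (T := {P x, P (x + 1)})
    (Set.pair_subset (hP.mem x) (hP.mem (x + 1)))
    ((Set.ncard_insert_le _ _).trans (by rw [Set.ncard_singleton]; omega))
  obtain ⟨u, lo, hi, hu⟩ :=
    exists_isMaxCrossing (hij.exists_isCrossing hP hw hind hx Set.Subset.rfl hy hheavy)
  obtain ⟨S, hSC, hScard, hS⟩ := exists_isHeavyArc_isGap hP hw hℓ hfree hu.notMem hu.adj_hi
  obtain ⟨y, hy, hyS, hheavy⟩ := hbig hSC hScard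
  obtain ⟨a, b, ha, hb, hab, hgap⟩ := hS y hy hyS hheavy
  obtain ⟨rfl, rfl⟩ := hu.eq_of_isGap hP hgap ha hb (hmin a b hab)
  obtain ⟨y, hy, -, hheavy⟩ := hsep hij.toIsArc (arcSep_subset hP)
    (hab.ncard_arcSep_le hP hℓ hfree)
  exact hu.not_isHeavy_componentOutside hP hw hind hij hx hab Set.Subset.rfl hy hheavy

/-- main lemma — `W_ℓ`-induced-minor-free connected graph with an
induced cycle `C` whose complement is independent has a balanced separator
inside `C` of size at most `(ℓ-1)²`. -/
theorem no_big_components [Finite V] (G : SimpleGraph V) (ℓ : ℕ) (hℓ : 4 ≤ ℓ)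
    (hconn : G.Connected) (hfree : ¬ IsInducedMinor (wheel ℓ) G)
    (w : V → ℝ) (hw0 : ∀ v, 0 ≤ w v) (hw1 : setWeight w (Set.univ : Set V) = 1)
    (C : Set V) (hC : IsInducedCycle G C) (hC4 : 4 ≤ C.ncard)
    (hind : ∀ u, u ∉ C → ∀ v, v ∉ C → ¬ G.Adj u v)
    (hJw : ∀ v, v ∉ C → w v ≤ 1 / 2) :
    ∃ S ⊆ C, S.ncard ≤ (ℓ - 1) ^ 2 ∧ IsBalancedSep G w S := by
  exact no_big_components_general (by omega) hfree hw0 hC (fun u hu v hv _ => hind u hu v hv)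
    (hw1.symm ▸ hJw)
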